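/- Let n ≥ 4 be even and let M be any set partition of {1,…,n} into two-element blocks (a perfect matching). Then T_M − T_{P₀} lies in the ℚ-linear span of {t_σ : σ ∈ Sₙ}, where P₀ = {{1,2},{3,4},…,{n−1,n}}. (Concrete form of the lemma: the weight system value of any disjoint union of struts is congruent to c^{⊗ n/2} modulo the image of the weight system on connected trees.) -/

import Mathlib

/- Let n = 2m ≥ 4 be even and M a perfect matching of {1,…,n} (a set partition
   into two-element blocks).  Then T_M − T_{P₀} lies in the ℚ-span of the
   tensors t_σ (σ ∈ Sₙ), where P₀ = {{1,2},{3,4},…,{n−1,n}}; the tensor T_{P₀}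
   is characterized by κ^{⊗n}(T_{P₀}, x₁⊗⋯⊗xₙ) = ∏ᵢ κ(x_{2i−1}, x_{2i}).
   κ, T_M, T_{P₀} and the family t are quantified via their defining
   (κ-contraction) properties. -/

open scoped TensorProduct

set_option synthInstance.maxHeartbeats 1000000
set_option maxHeartbeats 1000000

noncomputable section

abbrev sl2 : Type := ↥(LieAlgebra.SpecialLinear.sl (Fin 2) ℚ)

def H : sl2 :=
  ⟨!![1, 0; 0, -1], show _ ∈ LinearMap.ker (Matrix.traceLinearMap (Fin 2) ℚ ℚ) from
    LinearMap.mem_ker.2 (by simp [Matrix.trace_fin_two])⟩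

def E : sl2 :=
  ⟨!![0, 1; 0, 0], show _ ∈ LinearMap.ker (Matrix.traceLinearMap (Fin 2) ℚ ℚ) from
    LinearMap.mem_ker.2 (by simp [Matrix.trace_fin_two])⟩

def F : sl2 :=
  ⟨!![0, 0; 1, 0], show _ ∈ LinearMap.ker (Matrix.traceLinearMap (Fin 2) ℚ ℚ) from
    LinearMap.mem_ker.2 (by simp [Matrix.trace_fin_two])⟩

/-- The n-fold tensor power sl₂^{⊗n}. -/
abbrev TP (n : ℕ) : Type := ⨂[ℚ] (_ : Fin n), sl2

/-- The adjoint action of `x ∈ sl₂` on `sl₂^{⊗n}`, extended as a derivation. -/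
def actOn (n : ℕ) (x : sl2) : TP n →ₗ[ℚ] TP n :=
  ∑ i : Fin n,
    PiTensorProduct.map (fun j => if j = i then LieAlgebra.ad ℚ sl2 x else LinearMap.id)

/-- The space of invariant tensors of `sl₂^{⊗n}`. -/
def Invariants (n : ℕ) : Submodule ℚ (TP n) :=
  ⨅ x : sl2, LinearMap.ker (actOn n x)

/-- Pairing of `sl₂^{⊗n}` against `x₁ ⊗ ⋯ ⊗ xₙ` via `κ^{⊗n}`:
on pure tensors, `pairT κ n x (a₁ ⊗ ⋯ ⊗ aₙ) = ∏ i, κ(aᵢ, xᵢ)`. -/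
def pairT (κ : sl2 →ₗ[ℚ] sl2 →ₗ[ℚ] ℚ) (n : ℕ) (x : Fin n → sl2) : TP n →ₗ[ℚ] ℚ :=
  PiTensorProduct.lift
    ((MultilinearMap.mkPiAlgebra ℚ (Fin n) ℚ).compLinearMap fun i => κ.flip (x i))

/-- Left-iterated Lie bracket of a list: `[[⋯[a₁,a₂],⋯],a_k]`. -/
def lBrk : List sl2 → sl2
  | [] => 0
  | a :: l => l.foldl (fun y z => ⁅y, z⁆) a

/-- `κ([[⋯[x₁,x₂],⋯],x_{k-1}], x_k)`, read as `κ(x₁,x₂)` when `k = 2`. -/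
def brkVal (κ : sl2 →ₗ[ℚ] sl2 →ₗ[ℚ] ℚ) {k : ℕ} (x : Fin k → sl2) : ℚ :=
  κ (lBrk (List.ofFn x).dropLast) ((List.ofFn x).getLastD 0)

/-- For a block `B = {j₁ < ⋯ < j_k}`: `κ([[⋯[x_{j₁},x_{j₂}],⋯],x_{j_{k−1}}], x_{j_k})`. -/
def blockVal (κ : sl2 →ₗ[ℚ] sl2 →ₗ[ℚ] ℚ) {n : ℕ} (x : Fin n → sl2)
    (B : Finset (Fin n)) : ℚ :=
  κ (lBrk (((B.sort (· ≤ ·)).map x).dropLast)) (((B.sort (· ≤ ·)).map x).getLastD 0)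

/-- `P` is a set partition of `Fin n` all of whose blocks have ≥ 2 elements. -/
def IsPartitionGe2 (n : ℕ) (P : Finset (Finset (Fin n))) : Prop :=
  (∀ i : Fin n, ∃! B, B ∈ P ∧ i ∈ B) ∧ (∀ B ∈ P, 2 ≤ B.card)

theorem sl2_decomp (a : sl2) : a = (a.1 0 0) • H + (a.1 0 1) • E + (a.1 1 0) • F := by
  have ht : a.1 0 0 + a.1 1 1 = 0 := by
    have := LinearMap.mem_ker.1 (show a.1 ∈ LinearMap.ker (Matrix.traceLinearMap (Fin 2) ℚ ℚ) from a.2)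
    simpa [Matrix.trace_fin_two] using this
  apply Subtype.ext
  ext i j
  fin_cases i <;> fin_cases j <;> simp [H, E, F]
  linarith

/-- The hypotheses on the form. -/
structure IsK (κ : sl2 →ₗ[ℚ] sl2 →ₗ[ℚ] ℚ) : Prop where
  hHH : κ H H = 2
  hEF : κ E F = 1
  hFE : κ F E = 1
  hHE : κ H E = 0
  hEH : κ E H = 0
  hHF : κ H F = 0
  hFH : κ F H = 0
  hEE : κ E E = 0
  hFF : κ F F = 0

theorem IsK.val {κ : sl2 →ₗ[ℚ] sl2 →ₗ[ℚ] ℚ} (h : IsK κ) (a b : sl2) :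
    κ a b = 2 * a.1 0 0 * b.1 0 0 + a.1 0 1 * b.1 1 0 + a.1 1 0 * b.1 0 1 := by
  conv_lhs => rw [sl2_decomp a, sl2_decomp b]
  simp only [map_add, map_smul, LinearMap.add_apply, LinearMap.smul_apply, smul_eq_mul,
    h.hHH, h.hEF, h.hFE, h.hHE, h.hEH, h.hHF, h.hFH, h.hEE, h.hFF]
  ring

theorem IsK.symm {κ : sl2 →ₗ[ℚ] sl2 →ₗ[ℚ] ℚ} (h : IsK κ) (a b : sl2) : κ a b = κ b a := by
  rw [h.val, h.val]; ring

theorem IsK.brk {κ : sl2 →ₗ[ℚ] sl2 →ₗ[ℚ] ℚ} (h : IsK κ) (a b c : sl2) :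
    ⁅⁅a, b⁆, c⁆ = (2 * κ b c) • a - (2 * κ a c) • b := by
  have ht : ∀ a : sl2, a.1 1 1 = - a.1 0 0 := by
    intro a
    have := LinearMap.mem_ker.1 (show a.1 ∈ LinearMap.ker (Matrix.traceLinearMap (Fin 2) ℚ ℚ) from a.2)
    simp [Matrix.trace_fin_two] at this
    linarith
  have hs : ∀ (q : ℚ) (a : sl2), (q • a).1 = q • a.1 := fun _ _ => rfl
  have hd : ∀ (a b : sl2), (a - b).1 = a.1 - b.1 := fun _ _ => rfl
  have hb : ∀ (a b : sl2), (⁅a, b⁆ : sl2).1 = a.1 * b.1 - b.1 * a.1 := fun _ _ => rfl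
  apply Subtype.ext
  rw [hd, hs, hs, hb, hb, h.val, h.val]
  ext i j
  fin_cases i <;> fin_cases j <;>
    simp [Matrix.mul_apply, Fin.sum_univ_two, ht] <;> ring

/-- The comb form. -/
def cmb (κ : sl2 →ₗ[ℚ] sl2 →ₗ[ℚ] ℚ) {ι : Type} (l : List ι) (x : ι → sl2) : ℚ :=
  κ (lBrk (l.map x).dropLast) ((l.map x).getLastD 0)

/-- Product of the form over consecutive pairs. -/
def pp (κ : sl2 →ₗ[ℚ] sl2 →ₗ[ℚ] ℚ) {ι : Type} : List ι → (ι → sl2) → ℚ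
  | [], _ => 1
  | [_], _ => 1
  | a :: b :: l, x => κ (x a) (x b) * pp κ l x

theorem pp_append {κ : sl2 →ₗ[ℚ] sl2 →ₗ[ℚ] ℚ} {ι : Type} (x : ι → sl2) (L : List ι) :
    ∀ K : List ι, Even K.length → pp κ (K ++ L) x = pp κ K x * pp κ L x
  | [], _ => by simp [pp]
  | [_], h => by simp at h
  | a :: b :: K, h => by
    have : Even K.length := by simpa [Nat.even_add_one] using h
    simp [pp, pp_append x L K this, mul_assoc]

theorem foldl_add_smul (l : List sl2) : ∀ (p q : ℚ) (a b : sl2),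
    l.foldl (fun y z => ⁅y, z⁆) (p • a - q • b) =
      p • l.foldl (fun y z => ⁅y, z⁆) a - q • l.foldl (fun y z => ⁅y, z⁆) b := by
  induction l with
  | nil => intros; rfl
  | cons c l ih =>
    intro p q a b
    simp only [List.foldl_cons, sub_lie, smul_lie, ih]

theorem foldl_neg' (l : List sl2) (a : sl2) :
    l.foldl (fun y z => ⁅y, z⁆) (-a) = - l.foldl (fun y z => ⁅y, z⁆) a := by
  have := foldl_add_smul l 0 1 0 a
  simpa using this

theorem cmb_rel {κ : sl2 →ₗ[ℚ] sl2 →ₗ[ℚ] ℚ} (h : IsK κ) {ι : Type} (x : ι → sl2)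
    (a b c d : ι) (R : List ι) :
    cmb κ (a :: b :: c :: d :: R) x =
      2 * (κ (x b) (x c) * cmb κ (a :: d :: R) x - κ (x a) (x c) * cmb κ (b :: d :: R) x) := by
  simp only [cmb, List.map_cons, List.dropLast_cons_cons, lBrk, List.foldl_cons, h.brk,
    foldl_add_smul, map_sub, map_smul, LinearMap.sub_apply, LinearMap.smul_apply, smul_eq_mul,
    List.getLastD_cons]
  ring

theorem cmb_anti {κ : sl2 →ₗ[ℚ] sl2 →ₗ[ℚ] ℚ} {ι : Type} (x : ι → sl2)
    (a b c : ι) (R : List ι) :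
    cmb κ (a :: b :: c :: R) x = - cmb κ (b :: a :: c :: R) x := by
  simp only [cmb, List.map_cons, List.dropLast_cons_cons, lBrk, List.foldl_cons,
    List.getLastD_cons]
  rw [← lie_skew (x a) (x b), foldl_neg', map_neg, LinearMap.neg_apply]

/-- Span of the combs using every index. -/
def WW (κ : sl2 →ₗ[ℚ] sl2 →ₗ[ℚ] ℚ) (n : ℕ) : Submodule ℚ ((Fin n → sl2) → ℚ) :=
  Submodule.span ℚ {g | ∃ l : List (Fin n), l.Perm (List.finRange n) ∧ g = cmb κ l}

theorem strut_cmb {κ : sl2 →ₗ[ℚ] sl2 →ₗ[ℚ] ℚ} (h : IsK κ) {n : ℕ} :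
    ∀ (P : List (Fin n)) (a d e : Fin n) (R : List (Fin n)), Even P.length →
      (P ++ a :: d :: e :: R).Perm (List.finRange n) →
      (fun x => pp κ P x * cmb κ (a :: d :: e :: R) x) ∈ WW κ n
  | [], a, d, e, R, _, hp => by
    apply Submodule.subset_span
    exact ⟨_, hp, by funext x; simp [pp]⟩
  | [_], a, d, e, R, hE, hp => by simp at hE
  | b :: c :: P, a, d, e, R, hE, hp => by
    have hE' : Even P.length := by simpa [Nat.even_add_one] using hE
    have key : ∀ a b c d : Fin n, (b :: c :: P ++ a :: d :: e :: R).Perm (List.finRange n) →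
        (fun x => pp κ (b :: c :: P) x * cmb κ (a :: d :: e :: R) x
          - pp κ (a :: c :: P) x * cmb κ (b :: d :: e :: R) x) ∈ WW κ n := by
      intro a b c d hp
      have hq : (P ++ a :: b :: c :: (d :: e :: R)).Perm (List.finRange n) := by
        refine List.Perm.trans ?_ hp
        classical
        rw [List.perm_iff_count]
        intro z
        simp only [List.count_append, List.count_cons]
        omega
      have := (WW κ n).smul_mem (1/2 : ℚ) (strut_cmb h P a b c (d :: e :: R) hE' hq)
      convert this using 1
      funext x
      simp only [Pi.smul_apply, smul_eq_mul, cmb_rel h, pp]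
      ring
    have perm : ∀ a' b' c' d' : Fin n, [b', c', a', d'].Perm [b, c, a, d] →
        (b' :: c' :: P ++ a' :: d' :: e :: R).Perm (List.finRange n) := by
      intro a' b' c' d' hh
      refine List.Perm.trans ?_ hp
      classical
      rw [List.perm_iff_count] at hh ⊢
      intro z
      have := hh z
      simp only [List.count_append, List.count_cons, List.count_nil] at this ⊢
      omega
    have pq : ∀ a' b' c' d' : Fin n, (∀ z, List.count z [b', c', a', d'] = List.count z [b, c, a, d]) →
        (b' :: c' :: P ++ a' :: d' :: e :: R).Perm (List.finRange n) := by
      intro a' b' c' d' hh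
      exact perm _ _ _ _ (List.perm_iff_count.2 hh)
    have k1 := key a b c d hp
    have k2 := key d a c b (pq _ _ _ _ (by
      intro z; simp only [List.count_cons, List.count_nil]; omega))
    have k3 := key b d c a (pq _ _ _ _ (by
      intro z; simp only [List.count_cons, List.count_nil]; omega))
    have := (WW κ n).smul_mem (1/2 : ℚ) ((WW κ n).add_mem ((WW κ n).sub_mem k1 k2) k3)
    convert this using 1
    funext x
    simp only [Pi.smul_apply, Pi.add_apply, Pi.sub_apply, smul_eq_mul, pp]
    rw [cmb_anti x d b e R, cmb_anti x b a e R, cmb_anti x d a e R]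
    ring

theorem swap_mem {κ : sl2 →ₗ[ℚ] sl2 →ₗ[ℚ] ℚ} (h : IsK κ) {n : ℕ} (hn : Even n) :
    ∀ (Q K : List (Fin n)) (a b : Fin n) (L : List (Fin n)), Even K.length →
      (K ++ (Q ++ a :: b :: L)).Perm (List.finRange n) →
      (fun x => pp κ K x * (pp κ (Q ++ a :: b :: L) x - pp κ (Q ++ b :: a :: L) x)) ∈ WW κ n
  | [], K, a, b, L, hE, hp => by
    convert (WW κ n).zero_mem using 1
    funext x
    simp [pp, h.symm (x a) (x b)]
  | [q], K, a, b, [], hE, hp => by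
    exfalso
    have := hp.length_eq
    simp at this
    rw [← this] at hn
    simp [Nat.even_add, hE] at hn
    revert hn; decide
  | [q], K, a, b, r :: L, hE, hp => by
    have hL : Even L.length := by
      have := hp.length_eq
      simp at this
      rw [← this] at hn
      rw [Nat.even_iff] at *
      omega
    have hq : ((K ++ L) ++ q :: r :: b :: [a]).Perm (List.finRange n) := by
      refine List.Perm.trans ?_ hp
      rw [List.perm_iff_count]
      intro z
      simp only [List.count_append, List.count_cons, List.count_nil]
      omega
    have := (WW κ n).smul_mem (1/2 : ℚ)
      (strut_cmb h (K ++ L) q r b [a] (by simpa using hE.add hL) hq)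
    convert this using 1
    funext x
    simp only [Pi.smul_apply, smul_eq_mul, cmb_rel h, pp_append x L K hE, List.cons_append,
      List.nil_append, pp]
    simp only [cmb, List.map_cons, List.map_nil, List.dropLast, lBrk, List.foldl_nil,
      List.getLastD_cons, List.getLastD_nil]
    rw [h.symm (x r) (x b), h.symm (x r) (x a)]
    ring
  | q :: q' :: Q, K, a, b, L, hE, hp => by
    have := swap_mem h hn Q (K ++ [q, q']) a b L (by simpa [Nat.even_add] using hE)
      (by simpa using hp)
    convert this using 1
    funext x
    simp only [pp_append x [q, q'] K hE, List.cons_append, pp]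
    ring

theorem perm_mem {κ : sl2 →ₗ[ℚ] sl2 →ₗ[ℚ] ℚ} (h : IsK κ) {n : ℕ} (hn : Even n)
    {L L' : List (Fin n)} (hL : L.Perm L') :
    ∀ Q : List (Fin n), (Q ++ L).Perm (List.finRange n) →
      pp κ (Q ++ L) - pp κ (Q ++ L') ∈ WW κ n := by
  induction hL with
  | nil => intro Q _; simp
  | cons a _ ih =>
    intro Q hQ
    have := ih (Q ++ [a]) (by simpa using hQ)
    simpa using this
  | swap a b L =>
    intro Q hQ
    have := swap_mem h hn Q [] b a L (by simp) (by simpa using hQ)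
    convert this using 1
    funext x
    simp [pp]
  | trans h1 _ ih1 ih2 =>
    intro Q hQ
    have := (WW κ n).add_mem (ih1 Q hQ) (ih2 Q ((h1.append_left Q).symm.trans hQ))
    simpa using this

theorem pp_flatMap {κ : sl2 →ₗ[ℚ] sl2 →ₗ[ℚ] ℚ} {ι β : Type} (x : ι → sl2)
    (G : β → List ι) (v : β → ℚ) (l : List β)
    (hl : ∀ b ∈ l, ∃ i j, G b = [i, j] ∧ v b = κ (x i) (x j)) :
    pp κ (l.flatMap G) x = (l.map v).prod := by
  induction l with
  | nil => simp [pp]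
  | cons b l ih =>
    obtain ⟨i, j, h1, h2⟩ := hl b (by simp)
    simp [h1, h2, pp, ih (fun b hb => hl b (by simp [hb]))]

theorem pairT_expand {κ : sl2 →ₗ[ℚ] sl2 →ₗ[ℚ] ℚ} (h : IsK κ) (n : ℕ) (T : TP n) :
    T = ∑ g : Fin n → Fin 3, pairT κ n (fun i => ![(1/2 : ℚ) • H, F, E] (g i)) T •
      PiTensorProduct.tprod ℚ (fun i => ![H, E, F] (g i)) := by
  induction T using PiTensorProduct.induction_on with
  | smul_tprod r a =>
    have ha : a = fun i => ∑ k : Fin 3, κ (a i) (![(1/2 : ℚ) • H, F, E] k) • ![H, E, F] k := by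
      funext i
      conv_lhs => rw [sl2_decomp (a i)]
      simp only [Fin.sum_univ_three, h.val]
      have hs : ∀ (q : ℚ) (a : sl2), (q • a).1 = q • a.1 := fun _ _ => rfl
      simp [H, E, F, hs]
      congr 1
      ring
    simp only [map_smul, smul_assoc, ← Finset.smul_sum]
    congr 1
    conv_lhs => rw [ha, MultilinearMap.map_sum]
    refine Finset.sum_congr rfl fun g _ => ?_
    rw [MultilinearMap.map_smul_univ]
    simp [pairT]
  | add S T hS hT =>
    simp only [map_add, add_smul, Finset.sum_add_distrib]
    rw [← hS, ← hT]

/-- All pairings at once. -/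
def allPair (κ : sl2 →ₗ[ℚ] sl2 →ₗ[ℚ] ℚ) (n : ℕ) : TP n →ₗ[ℚ] ((Fin n → sl2) → ℚ) :=
  LinearMap.pi fun x => pairT κ n x

theorem allPair_inj {κ : sl2 →ₗ[ℚ] sl2 →ₗ[ℚ] ℚ} (h : IsK κ) (n : ℕ) :
    Function.Injective (allPair κ n) := by
  intro S T hST
  have : ∀ x, pairT κ n x S = pairT κ n x T := fun x => congrFun hST x
  rw [pairT_expand h n S, pairT_expand h n T]
  simp only [this]

theorem perm_ofFn {n : ℕ} {l : List (Fin n)} (hl : l.Perm (List.finRange n)) :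
    ∃ σ : Equiv.Perm (Fin n), l = List.ofFn σ := by
  have hlen : l.length = n := by simpa using hl.length_eq
  have hnd : l.Nodup := hl.nodup_iff.2 (List.nodup_finRange n)
  let f : Fin n → Fin n := fun i => l.get (i.cast hlen.symm)
  have hf : Function.Injective f := by
    intro i j hij
    have := (List.nodup_iff_injective_get.1 hnd) hij
    simpa [Fin.ext_iff] using this
  refine ⟨Equiv.ofBijective f (Finite.injective_iff_bijective.1 hf), ?_⟩
  apply List.ext_get
  · simp [hlen]
  · intro i h1 h2
    simp [f]

theorem perm_finRange {n : ℕ} {l : List (Fin n)} (h1 : l.Nodup) (h2 : ∀ i, i ∈ l) :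
    l.Perm (List.finRange n) :=
  (List.perm_ext_iff_of_nodup h1 (List.nodup_finRange n)).2 (by simp [h2])

theorem matching_tensor_congruent_mod_span
    (κ : sl2 →ₗ[ℚ] sl2 →ₗ[ℚ] ℚ)
    (hHH : κ H H = 2) (hEF : κ E F = 1) (hFE : κ F E = 1)
    (hHE : κ H E = 0) (hEH : κ E H = 0) (hHF : κ H F = 0) (hFH : κ F H = 0)
    (hEE : κ E E = 0) (hFF : κ F F = 0) :
    ∀ m, 2 ≤ m →
    ∀ M : Finset (Finset (Fin (2 * m))),
      IsPartitionGe2 (2 * m) M → (∀ B ∈ M, B.card = 2) →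
    ∀ TM : TP (2 * m),
      (∀ x : Fin (2 * m) → sl2, pairT κ (2 * m) x TM = ∏ B ∈ M, blockVal κ x B) →
    ∀ T0 : TP (2 * m),
      (∀ x : Fin (2 * m) → sl2, pairT κ (2 * m) x T0 =
        ∏ i : Fin m, κ (x ⟨2 * i.1, by have := i.2; omega⟩)
          (x ⟨2 * i.1 + 1, by have := i.2; omega⟩)) →
    ∀ t : Equiv.Perm (Fin (2 * m)) → TP (2 * m),
      (∀ σ (x : Fin (2 * m) → sl2), pairT κ (2 * m) x (t σ) = brkVal κ (x ∘ σ)) →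
      TM - T0 ∈ Submodule.span ℚ (Set.range t) := by
  intro m hm M hM hM2 TM hTM T0 hT0 t ht
  have h : IsK κ := ⟨hHH, hEF, hFE, hHE, hEH, hHF, hFH, hEE, hFF⟩
  have hn : Even (2 * m) := by simp
  -- the lists
  let G0 : Fin m → List (Fin (2 * m)) := fun i =>
    [⟨2 * i.1, by have := i.2; omega⟩, ⟨2 * i.1 + 1, by have := i.2; omega⟩]
  let G1 : Finset (Fin (2 * m)) → List (Fin (2 * m)) := fun B => B.sort (· ≤ ·)
  have p0 : ((List.finRange m).flatMap G0).Perm (List.finRange (2 * m)) := by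
    apply perm_finRange
    · rw [List.nodup_flatMap]
      refine ⟨fun i _ => by simp [G0], ?_⟩
      refine (List.nodup_finRange m).imp ?_
      intro i j hij
      have : i.1 ≠ j.1 := fun hh => hij (Fin.ext hh)
      simp [G0, Function.onFun, List.disjoint_left]
      omega
    · intro i
      rw [List.mem_flatMap]
      refine ⟨⟨i.1 / 2, by omega⟩, by simp, ?_⟩
      simp [G0, Fin.ext_iff]
      omega
  have p1 : (M.toList.flatMap G1).Perm (List.finRange (2 * m)) := by
    apply perm_finRange
    · rw [List.nodup_flatMap]
      refine ⟨fun i _ => by simp [G1], ?_⟩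
      refine List.Nodup.pairwise_of_forall_ne M.nodup_toList ?_
      intro A hA B hB hAB
      simp only [Function.onFun, List.disjoint_left, G1, Finset.mem_sort]
      intro i hiA hiB
      exact hAB ((hM.1 i).unique ⟨by simpa using hA, hiA⟩ ⟨by simpa using hB, hiB⟩)
    · intro i
      obtain ⟨B, ⟨hB, hi⟩, -⟩ := hM.1 i
      rw [List.mem_flatMap]
      exact ⟨B, by simpa using hB, by simpa [G1] using hi⟩
  have e0 : allPair κ (2 * m) T0 = pp κ ((List.finRange m).flatMap G0) := by
    funext x
    refine (hT0 x).trans ?_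
    rw [pp_flatMap x G0 (fun i => κ (x ⟨2 * i.1, by have := i.2; omega⟩)
          (x ⟨2 * i.1 + 1, by have := i.2; omega⟩)) _ (fun i _ => ⟨_, _, rfl, rfl⟩)]
    rw [← List.ofFn_eq_map, List.prod_ofFn]
  have e1 : allPair κ (2 * m) TM = pp κ (M.toList.flatMap G1) := by
    funext x
    refine (hTM x).trans ?_
    rw [pp_flatMap x G1 (blockVal κ x), Finset.prod_map_toList]
    intro B hB
    have hl : (B.sort (· ≤ ·)).length = 2 := by
      rw [Finset.length_sort]; exact hM2 B (by simpa using hB)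
    obtain ⟨i, j, hij⟩ := List.length_eq_two.1 hl
    exact ⟨i, j, hij, by simp [blockVal, hij, lBrk]⟩
  have hW : WW κ (2 * m) ≤ (Submodule.span ℚ (Set.range t)).map (allPair κ (2 * m)) := by
    rw [WW, Submodule.span_le]
    rintro g ⟨l, hl, rfl⟩
    obtain ⟨σ, rfl⟩ := perm_ofFn hl
    refine ⟨t σ, Submodule.subset_span ⟨σ, rfl⟩, ?_⟩
    funext x
    refine (ht σ x).trans ?_
    simp only [brkVal, cmb, List.map_ofFn]
  have hd := hW (perm_mem h hn (p1.trans p0.symm) [] p1)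
  simp only [List.nil_append] at hd
  rw [← e0, ← e1, ← map_sub] at hd
  obtain ⟨y, hy, hyy⟩ := hd
  rwa [← allPair_inj h _ hyy]
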